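/- Let h : [0,1] → [0,∞) be continuous and define w(t) = ∫₀¹ k₁(t,s)·h(s) ds = (1−t)∫₀ᵗ s·h(s) ds + t∫ₜ¹ (1−s)·h(s) ds for t ∈ [0,1]. Then for every t ∈ [0,1], t(1−t)·|w'(t)| ≤ w(t); in particular sup_{t∈(0,1)} t(1−t)|w'(t)| ≤ max_{t∈[0,1]} w(t). -/

import Mathlib

/-- Green's function for the Dirichlet problem on `[0,1]`. -/
noncomputable def k1 (t s : ℝ) : ℝ := if s ≤ t then s * (1 - t) else t * (1 - s)

/-!
Off the diagonal `t = s` the kernel satisfies `t * (1 - t) * |∂k₁/∂t| ≤ k₁`, because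
`∂k₁/∂t` is `-s` for `s < t` and `1 - s` for `t < s`. As `k₁` is Lipschitz in `t`, one may
differentiate under the integral sign for every integrable `h`, and integrating the pointwise
bound against `h ≥ 0` gives the estimate for `w`.
-/

open Set Filter MeasureTheory Topology

/-- The partial derivative `∂k₁/∂t` of Green's function. It exists for `s ≠ t`; the value on the
diagonal is an arbitrary choice, immaterial under an integral in `s`. -/
noncomputable def k1Deriv (t s : ℝ) : ℝ := if s ≤ t then -s else 1 - s

section Kernel

variable {t s : ℝ}

theorem k1_eq_min_sub_mul (t s : ℝ) : k1 t s = min t s - t * s := by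
  unfold k1
  split_ifs with hst
  · rw [min_eq_right hst]; ring
  · rw [min_eq_left (not_le.1 hst).le]; ring

theorem continuous_k1_right (t : ℝ) : Continuous (k1 t) := by
  simp only [funext (k1_eq_min_sub_mul t)]
  fun_prop

theorem measurable_k1Deriv_right (t : ℝ) : Measurable (k1Deriv t) :=
  Measurable.ite measurableSet_Iic measurable_neg (measurable_const.sub measurable_id)

theorem abs_k1_sub_k1_le (x y s : ℝ) : |k1 x s - k1 y s| ≤ (1 + |s|) * |x - y| := by
  have hmin : |min x s - min y s| ≤ |x - y| := by
    simpa using abs_min_sub_min_le_max x s y s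
  calc |k1 x s - k1 y s| = |(min x s - min y s) - s * (x - y)| := by
        rw [k1_eq_min_sub_mul, k1_eq_min_sub_mul]; ring_nf
    _ ≤ |min x s - min y s| + |s * (x - y)| := abs_sub _ _
    _ ≤ |x - y| + |s| * |x - y| := by rw [abs_mul]; gcongr
    _ = (1 + |s|) * |x - y| := by ring

theorem hasDerivAt_k1_left (hst : s ≠ t) : HasDerivAt (k1 · s) (k1Deriv t s) t := by
  rcases hst.lt_or_gt with hst | hst
  · have heq : (k1 · s) =ᶠ[𝓝 t] fun x => s * (1 - x) := by
      filter_upwards [lt_mem_nhds hst] with x hx using if_pos hx.le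
    simpa [k1Deriv, hst.le] using
      (((hasDerivAt_id t).const_sub 1).const_mul s).congr_of_eventuallyEq heq
  · have heq : (k1 · s) =ᶠ[𝓝 t] fun x => x * (1 - s) := by
      filter_upwards [gt_mem_nhds hst] with x hx using if_neg hx.not_ge
    simpa [k1Deriv, hst.not_ge] using
      ((hasDerivAt_id t).mul_const (1 - s)).congr_of_eventuallyEq heq

theorem mul_abs_k1Deriv_le (ht : t ∈ Icc (0 : ℝ) 1) (hs : s ∈ Icc (0 : ℝ) 1) :
    t * (1 - t) * |k1Deriv t s| ≤ k1 t s := by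
  have ht' : 0 ≤ 1 - t := sub_nonneg.2 ht.2
  have hs' : 0 ≤ 1 - s := sub_nonneg.2 hs.2
  unfold k1 k1Deriv
  split_ifs
  · rw [abs_neg, abs_of_nonneg hs.1]
    calc t * (1 - t) * s = t * (s * (1 - t)) := by ring
      _ ≤ s * (1 - t) := mul_le_of_le_one_left (mul_nonneg hs.1 ht') ht.2
  · rw [abs_of_nonneg hs']
    calc t * (1 - t) * (1 - s) = (1 - t) * (t * (1 - s)) := by ring
      _ ≤ t * (1 - s) :=
        mul_le_of_le_one_left (mul_nonneg ht.1 hs') (sub_le_self 1 ht.1)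

theorem k1_nonneg (ht : t ∈ Icc (0 : ℝ) 1) (hs : s ∈ Icc (0 : ℝ) 1) : 0 ≤ k1 t s :=
  (mul_nonneg (mul_nonneg ht.1 (sub_nonneg.2 ht.2)) (abs_nonneg _)).trans
    (mul_abs_k1Deriv_le ht hs)

end Kernel

section Potential

variable {E : Type*} [NormedAddCommGroup E] [NormedSpace ℝ E] {h : ℝ → E} {a b : ℝ}

theorem intervalIntegrable_k1_smul (hh : IntervalIntegrable h volume a b) (t : ℝ) :
    IntervalIntegrable (fun s => k1 t s • h s) volume a b :=
  hh.continuousOn_smul (continuous_k1_right t).continuousOn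

theorem hasDerivAt_integral_k1_smul (hh : IntervalIntegrable h volume a b) (t : ℝ) :
    HasDerivAt (fun t => ∫ s in a..b, k1 t s • h s) (∫ s in a..b, k1Deriv t s • h s) t := by
  have hmeas : AEStronglyMeasurable h (volume.restrict (uIoc a b)) :=
    hh.def'.aestronglyMeasurable
  have hbound : IntervalIntegrable (fun s => (1 + |s|) * ‖h s‖) volume a b :=
    hh.norm.continuousOn_mul (by fun_prop)
  have hlip (s : ℝ) : LipschitzOnWith (Real.nnabs ((1 + |s|) * ‖h s‖))
      (fun x => k1 x s • h s) univ := by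
    refine LipschitzOnWith.of_dist_le_mul fun x _ y _ => ?_
    calc dist (k1 x s • h s) (k1 y s • h s) = |k1 x s - k1 y s| * ‖h s‖ := by
          rw [dist_eq_norm, ← sub_smul, norm_smul, Real.norm_eq_abs]
      _ ≤ (1 + |s|) * |x - y| * ‖h s‖ := by gcongr; exact abs_k1_sub_k1_le x y s
      _ = Real.nnabs ((1 + |s|) * ‖h s‖) * dist x y := by
          have hnonneg : 0 ≤ (1 + |s|) * ‖h s‖ := by positivity
          rw [Real.coe_nnabs, abs_of_nonneg hnonneg, Real.dist_eq]; ring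
  refine (intervalIntegral.hasDerivAt_integral_of_dominated_loc_of_lip univ_mem
    (.of_forall fun x => (intervalIntegrable_k1_smul hh x).def'.aestronglyMeasurable)
    (intervalIntegrable_k1_smul hh t)
    ((measurable_k1Deriv_right t).aestronglyMeasurable.smul hmeas)
    (.of_forall fun s _ => hlip s) hbound ?_).2
  filter_upwards [Measure.ae_ne volume t] with s hst _
  exact (hasDerivAt_k1_left hst).smul_const (h s)

theorem continuousOn_of_eq_integral_k1_smul {w : ℝ → E}
    (hh : IntervalIntegrable h volume 0 1)
    (hw : ∀ t ∈ Icc (0 : ℝ) 1, w t = ∫ s in (0 : ℝ)..1, k1 t s • h s) :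
    ContinuousOn w (Icc 0 1) :=
  ContinuousOn.congr
    (fun t _ => (hasDerivAt_integral_k1_smul hh t).continuousAt.continuousWithinAt) hw

theorem deriv_eq_integral_k1Deriv_smul {w : ℝ → E}
    (hh : IntervalIntegrable h volume 0 1)
    (hw : ∀ t ∈ Icc (0 : ℝ) 1, w t = ∫ s in (0 : ℝ)..1, k1 t s • h s) {t : ℝ}
    (ht : t ∈ Ioo (0 : ℝ) 1) : deriv w t = ∫ s in (0 : ℝ)..1, k1Deriv t s • h s :=
  ((hasDerivAt_integral_k1_smul hh t).congr_of_eventuallyEq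
    (eventually_of_mem (Icc_mem_nhds ht.1 ht.2) hw)).deriv

theorem mul_norm_integral_k1Deriv_smul_le (hh : IntervalIntegrable h volume 0 1) {t : ℝ}
    (ht : t ∈ Icc (0 : ℝ) 1) :
    t * (1 - t) * ‖∫ s in (0 : ℝ)..1, k1Deriv t s • h s‖ ≤ ∫ s in (0 : ℝ)..1, k1 t s * ‖h s‖ := by
  have hnonneg : 0 ≤ t * (1 - t) := mul_nonneg ht.1 (sub_nonneg.2 ht.2)
  rw [← norm_smul_of_nonneg hnonneg, ← intervalIntegral.integral_smul]
  refine intervalIntegral.norm_integral_le_of_norm_le zero_le_one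
    (.of_forall fun s hs => ?_) (intervalIntegrable_k1_smul hh.norm t)
  rw [norm_smul_of_nonneg hnonneg, norm_smul, Real.norm_eq_abs, ← mul_assoc]
  gcongr
  exact mul_abs_k1Deriv_le ht (Ioc_subset_Icc_self hs)

end Potential

theorem mul_abs_deriv_le_of_eq_integral_k1_mul {h w : ℝ → ℝ}
    (hh : IntervalIntegrable h volume 0 1)
    (hpos : ∀ t ∈ Icc (0 : ℝ) 1, 0 ≤ h t)
    (hw : ∀ t ∈ Icc (0 : ℝ) 1, w t = ∫ s in (0 : ℝ)..1, k1 t s * h s) {t : ℝ}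
    (ht : t ∈ Icc (0 : ℝ) 1) : t * (1 - t) * |deriv w t| ≤ w t := by
  have hw_norm : w t = ∫ s in (0 : ℝ)..1, k1 t s * ‖h s‖ := by
    rw [hw t ht]
    refine intervalIntegral.integral_congr fun s hs => ?_
    rw [uIcc_of_le zero_le_one] at hs
    simp only [Real.norm_of_nonneg (hpos s hs)]
  have hw_nonneg : 0 ≤ w t := by
    rw [hw_norm]
    exact intervalIntegral.integral_nonneg zero_le_one fun s hs =>
      mul_nonneg (k1_nonneg ht hs) (norm_nonneg _)
  -- At the endpoints `deriv w t` depends on `w` outside `[0, 1]`, but its factor vanishes.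
  rcases eq_endpoints_or_mem_Ioo_of_mem_Icc ht with rfl | rfl | hIoo
  · simpa using hw_nonneg
  · simpa using hw_nonneg
  · rw [deriv_eq_integral_k1Deriv_smul hh hw hIoo, hw_norm]
    exact mul_norm_integral_k1Deriv_smul_le hh ht

theorem stmt13_general (h : ℝ → ℝ) (hh : IntervalIntegrable h volume 0 1)
    (hpos : ∀ t ∈ Icc (0 : ℝ) 1, 0 ≤ h t)
    (w : ℝ → ℝ) (hw : ∀ t ∈ Icc (0 : ℝ) 1, w t = ∫ s in (0 : ℝ)..1, k1 t s * h s) :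
    (∀ t ∈ Icc (0 : ℝ) 1, t * (1 - t) * |deriv w t| ≤ w t) ∧
    sSup ((fun t => t * (1 - t) * |deriv w t|) '' Ioo (0 : ℝ) 1)
      ≤ sSup (w '' Icc (0 : ℝ) 1) := by
  have hle (t : ℝ) (ht : t ∈ Icc (0 : ℝ) 1) : t * (1 - t) * |deriv w t| ≤ w t :=
    mul_abs_deriv_le_of_eq_integral_k1_mul hh hpos hw ht
  refine ⟨hle, csSup_le ((nonempty_Ioo.2 zero_lt_one).image _) ?_⟩
  rintro _ ⟨t, ht, rfl⟩
  have ht' : t ∈ Icc (0 : ℝ) 1 := Ioo_subset_Icc_self ht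
  have hbdd : BddAbove (w '' Icc (0 : ℝ) 1) :=
    isCompact_Icc.bddAbove_image (continuousOn_of_eq_integral_k1_smul hh hw)
  exact (hle t ht').trans (le_csSup hbdd (mem_image_of_mem w ht'))

/-- Let `h : [0,1] → [0,∞)` be continuous and
`w(t) = ∫₀¹ k₁(t,s)h(s) ds = (1−t)∫₀ᵗ s·h(s) ds + t∫ₜ¹ (1−s)·h(s) ds`.
Then `t(1−t)|w'(t)| ≤ w(t)` for every `t ∈ [0,1]`; in particular
`sup_{t∈(0,1)} t(1−t)|w'(t)| ≤ max_{t∈[0,1]} w(t)`. -/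
theorem stmt13 (h : ℝ → ℝ) (hcont : ContinuousOn h (Set.Icc 0 1))
    (hpos : ∀ t ∈ Set.Icc (0:ℝ) 1, 0 ≤ h t)
    (w : ℝ → ℝ) (hw : ∀ t ∈ Set.Icc (0:ℝ) 1, w t = ∫ s in (0:ℝ)..1, k1 t s * h s)
    (hw' : ∀ t ∈ Set.Icc (0:ℝ) 1,
      w t = (1 - t) * (∫ s in (0:ℝ)..t, s * h s) + t * ∫ s in t..(1:ℝ), (1 - s) * h s) :
    (∀ t ∈ Set.Icc (0:ℝ) 1, t * (1 - t) * |deriv w t| ≤ w t) ∧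
    sSup ((fun t => t * (1 - t) * |deriv w t|) '' Set.Ioo (0:ℝ) 1)
      ≤ sSup (w '' Set.Icc (0:ℝ) 1) := by
  exact stmt13_general h (hcont.intervalIntegrable_of_Icc zero_le_one) hpos w hw
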